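/- arXiv:1807.00379 — 2 statements merged into one kernel-verified Lean document; each statement's English description precedes it below -/
import Mathlib

section
/- Let U ∈ R^{t×n} have nonnegative entries with each row summing to 1. Then the dual cone of SDD^n_+(U) := U^T (SDD^t_+) U satisfies (SDD^n_+(U))* = {Y ∈ S^n : U Y U^T ∈ (SDD^t_+)*} = {Y ∈ S^n : U Y U^T ∈ (SDD^t)* + N^t}. -/
open Matrix Set

noncomputable section

/-- The embedding `ι_{ij} : S² → Sⁿ` placing a 2×2 symmetric matrix into
rows/columns `i, j` with zeros elsewhere. -/
def iota {n : ℕ} (i j : Fin n) (S : Matrix (Fin 2) (Fin 2) ℝ) :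
    Matrix (Fin n) (Fin n) ℝ :=
  Matrix.of fun r s =>
    (if r = i ∧ s = i then S 0 0 else 0) +
    (if r = i ∧ s = j then S 0 1 else 0) +
    (if r = j ∧ s = i then S 1 0 else 0) +
    (if r = j ∧ s = j then S 1 1 else 0)

/-- The cone `SDDⁿ = Σ_{i<j} ι_{ij}(S²₊)` of scaled diagonally dominant matrices. -/
def SDD (n : ℕ) : Set (Matrix (Fin n) (Fin n) ℝ) :=
  {X | ∃ S : Fin n → Fin n → Matrix (Fin 2) (Fin 2) ℝ,
    (∀ i j : Fin n, (S i j).PosSemidef) ∧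
    X = ∑ i : Fin n, ∑ j : Fin n, if i < j then iota i j (S i j) else 0}

/-- `Nⁿ`: symmetric entrywise nonnegative matrices. -/
def NonnegMat (n : ℕ) : Set (Matrix (Fin n) (Fin n) ℝ) :=
  {X | X.IsSymm ∧ ∀ i j, 0 ≤ X i j}

/-- Dual cone within the space of symmetric matrices, w.r.t. the trace inner product. -/
def dualCone {n : ℕ} (C : Set (Matrix (Fin n) (Fin n) ℝ)) :
    Set (Matrix (Fin n) (Fin n) ℝ) :=
  {Y | Y.IsSymm ∧ ∀ X ∈ C, 0 ≤ (X * Y).trace}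

/-- `SDDⁿ₊ = SDDⁿ ∩ Nⁿ`. -/
def SDDplus (n : ℕ) : Set (Matrix (Fin n) (Fin n) ℝ) := SDD n ∩ NonnegMat n

/-- `SDDⁿ₊(U) = Uᵀ (SDDᵗ₊) U`. -/
def SDDplusU {t n : ℕ} (U : Matrix (Fin t) (Fin n) ℝ) :
    Set (Matrix (Fin n) (Fin n) ℝ) :=
  {X | ∃ Y ∈ SDDplus t, X = Uᵀ * Y * U}

/-- The conic hull: finite nonnegative combinations of elements of `s`. -/
def conicHull {α : Type*} [AddCommMonoid α] [Module ℝ α] (s : Set α) : Set α :=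
  {x | ∃ (N : ℕ) (c : Fin N → ℝ) (v : Fin N → α),
    (∀ k, 0 ≤ c k) ∧ (∀ k, v k ∈ s) ∧ x = ∑ k, c k • v k}

/-- The completely positive cone `CPⁿ`. -/
def CP (n : ℕ) : Set (Matrix (Fin n) (Fin n) ℝ) :=
  {X | ∃ (k : ℕ) (B : Matrix (Fin k) (Fin n) ℝ), (∀ i j, 0 ≤ B i j) ∧ X = Bᵀ * B}

open scoped Pointwise

/-- The pairing of `iota i j S` with `Y` only sees the `2 × 2` principal block of `Y` at `i, j`. -/
lemma trace_iota_mul {n : ℕ} (i j : Fin n) (S : Matrix (Fin 2) (Fin 2) ℝ)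
    (Y : Matrix (Fin n) (Fin n) ℝ) :
    (iota i j S * Y).trace = S 0 0 * Y i i + S 0 1 * Y j i + S 1 0 * Y i j + S 1 1 * Y j j := by
  have h : iota i j S = single i i (S 0 0) + single i j (S 0 1) + single j i (S 1 0)
      + single j j (S 1 1) := by
    ext r s
    simp only [iota, of_apply, Matrix.add_apply, single_apply, eq_comm]
  simp [h, Matrix.add_mul, trace_single_mul]

lemma iota_zero {n : ℕ} (i j : Fin n) : iota i j 0 = 0 := by
  ext r s
  simp [iota]

lemma iota_mem_SDD {n : ℕ} {i j : Fin n} (hij : i < j) {S : Matrix (Fin 2) (Fin 2) ℝ}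
    (hS : S.PosSemidef) : iota i j S ∈ SDD n := by
  refine ⟨fun k l => if k = i ∧ l = j then S else 0, fun k l => ?_, ?_⟩
  · dsimp only
    split_ifs
    exacts [hS, PosSemidef.zero]
  · rw [Finset.sum_eq_single i, Finset.sum_eq_single j]
    · simp [hij]
    · intro l _ hl
      simp [hl, iota_zero]
    · simp
    · intro k _ hk
      simp [hk, iota_zero]
    · simp

/-- For `a, b ≥ 0`, the rank-one block `(a, b)ᵀ (a, b)` embeds into `SDDplus`. -/
lemma iota_vecMulVec_mem_SDDplus {n : ℕ} {i j : Fin n} (hij : i < j) {a b : ℝ}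
    (ha : 0 ≤ a) (hb : 0 ≤ b) : iota i j (vecMulVec ![a, b] ![a, b]) ∈ SDDplus n := by
  refine ⟨iota_mem_SDD hij ?_, ?_, fun r s => ?_⟩
  · simpa using posSemidef_vecMulVec_self_star ![a, b]
  · ext r s
    simp only [iota, transpose_apply, of_apply, vecMulVec_apply, cons_val_zero, cons_val_one,
      and_comm, mul_comm]
    ring
  · simp only [iota, of_apply, vecMulVec_apply, cons_val_zero, cons_val_one]
    have := mul_nonneg ha hb
    have := mul_nonneg hb ha
    have := mul_self_nonneg a
    have := mul_self_nonneg b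
    split_ifs <;> linarith

/-- A copositive binary quadratic form `p a² + 2 q a b + r b²` has `-√(p r) ≤ q`. -/
lemma neg_sqrt_le_of_copositive {p q r : ℝ}
    (h : ∀ a b : ℝ, 0 ≤ a → 0 ≤ b → 0 ≤ p * a ^ 2 + 2 * q * (a * b) + r * b ^ 2) :
    0 ≤ p ∧ 0 ≤ r ∧ -√(p * r) ≤ q := by
  have hp : 0 ≤ p := by simpa using h 1 0
  have hr : 0 ≤ r := by simpa using h 0 1
  refine ⟨hp, hr, ?_⟩
  rcases le_or_gt 0 q with hq | hq
  · exact (neg_nonpos.2 (Real.sqrt_nonneg _)).trans hq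
  rcases hp.eq_or_lt with rfl | hp'
  · have hq' : 0 < -q := neg_pos.2 hq
    have := h ((r + 1) / -q) 1 (by positivity) zero_le_one
    have e : q * ((r + 1) / -q) = -(r + 1) := by
      have := hq.ne
      field_simp
    nlinarith
  · have := h (-q) p (by linarith) hp
    have h2 : 0 ≤ p * (p * r - q ^ 2) := by linarith
    have h3 := nonneg_of_mul_nonneg_right h2 hp'
    have : -q ≤ √(p * r) := Real.le_sqrt_of_sq_le (by linarith)
    linarith

/-- The pairing of two positive semidefinite `2 × 2` matrices is nonnegative. -/
lemma pairing_nonneg_of_sq_le {x y z p q r : ℝ} (hx : 0 ≤ x) (hz : 0 ≤ z) (hy : y ^ 2 ≤ x * z)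
    (hp : 0 ≤ p) (hr : 0 ≤ r) (hq : q ^ 2 ≤ p * r) : 0 ≤ x * p + 2 * (y * q) + z * r := by
  have h1 : (2 * (y * q)) ^ 2 ≤ (x * p + z * r) ^ 2 := by
    have := mul_le_mul hy hq (sq_nonneg q) (mul_nonneg hx hz)
    nlinarith [sq_nonneg (x * p - z * r)]
  have := (abs_le.1 (abs_le_of_sq_le_sq h1 (by positivity))).1
  linarith

/-- Symmetric matrices whose `2 × 2` principal submatrices are positive semidefinite lie in the
dual of `SDD`. -/
lemma mem_dualCone_SDD {n : ℕ} {W : Matrix (Fin n) (Fin n) ℝ} (hW : W.IsSymm)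
    (h : ∀ i j, i < j → 0 ≤ W i i ∧ 0 ≤ W j j ∧ W i j ^ 2 ≤ W i i * W j j) :
    W ∈ dualCone (SDD n) := by
  refine ⟨hW, ?_⟩
  rintro _ ⟨S, hS, rfl⟩
  simp only [Finset.sum_mul, trace_sum]
  refine Finset.sum_nonneg fun i _ => Finset.sum_nonneg fun j _ => ?_
  split_ifs with hij
  · obtain ⟨hi, hj, hd⟩ := h i j hij
    have h10 : S i j 1 0 = S i j 0 1 := by simpa using (hS i j).isHermitian.apply 0 1
    have hdet := (hS i j).det_nonneg
    rw [det_fin_two, h10] at hdet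
    rw [trace_iota_mul, h10, hW.apply i j]
    have := pairing_nonneg_of_sq_le (hS i j).diag_nonneg (hS i j).diag_nonneg
      (by linarith : S i j 0 1 ^ 2 ≤ S i j 0 0 * S i j 1 1) hi hj hd
    linarith
  · simp

/-- The dual of `SDDplus` is the sum of the dual of `SDD` and the nonnegative matrices. -/
lemma dualCone_SDDplus (n : ℕ) :
    dualCone (SDDplus n) = dualCone (SDD n) + NonnegMat n := by
  ext Z
  constructor
  · rintro ⟨hZ, h⟩
    have key : ∀ i j, i < j → 0 ≤ Z i i ∧ 0 ≤ Z j j ∧ -√(Z i i * Z j j) ≤ Z i j := by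
      intro i j hij
      refine neg_sqrt_le_of_copositive fun a b ha hb => ?_
      have := h _ (iota_vecMulVec_mem_SDDplus hij ha hb)
      rw [trace_iota_mul, hZ.apply i j] at this
      simp only [vecMulVec_apply, cons_val_zero, cons_val_one] at this
      linarith
    let W : Matrix (Fin n) (Fin n) ℝ :=
      of fun i j => if i = j then Z i i else min (Z i j) √(Z i i * Z j j)
    have hW : W.IsSymm := by
      ext i j
      rcases eq_or_ne i j with rfl | hij
      · rfl
      · simp [W, hij, hij.symm, hZ.apply i j, mul_comm]
    refine ⟨W, mem_dualCone_SDD hW fun i j hij => ?_, Z - W, ⟨hZ.sub hW, fun i j => ?_⟩,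
      add_sub_cancel W Z⟩
    · obtain ⟨hi, hj, hq⟩ := key i j hij
      simp only [W, of_apply, if_true, hij.ne, if_false]
      refine ⟨hi, hj, ?_⟩
      refine (sq_le_sq' (le_min hq ?_) (min_le_right _ _)).trans_eq
        (Real.sq_sqrt (mul_nonneg hi hj))
      linarith [Real.sqrt_nonneg (Z i i * Z j j)]
    · simp only [W, Matrix.sub_apply, of_apply, sub_nonneg]
      split_ifs with hij
      · rw [hij]
      · exact min_le_left _ _
  · rintro ⟨W, ⟨hW, hWX⟩, N, ⟨hN, hN0⟩, rfl⟩
    refine ⟨hW.add hN, fun X hX => ?_⟩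
    rw [Matrix.mul_add, trace_add]
    refine add_nonneg (hWX X hX.1) (Finset.sum_nonneg fun i _ => ?_)
    rw [diag_apply, mul_apply]
    exact Finset.sum_nonneg fun j _ => mul_nonneg (hX.2.2 i j) (hN0 j i)

/-- The dual of the image cone `SDDplusU U` is the preimage of the dual cone. -/
lemma dualCone_SDDplusU {t n : ℕ} (U : Matrix (Fin t) (Fin n) ℝ) :
    dualCone (SDDplusU U) = {Y | Y.IsSymm ∧ U * Y * Uᵀ ∈ dualCone (SDDplus t)} := by
  have adj : ∀ (X : Matrix (Fin t) (Fin t) ℝ) (Y : Matrix (Fin n) (Fin n) ℝ),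
      (Uᵀ * X * U * Y).trace = (X * (U * Y * Uᵀ)).trace := fun X Y => by
    rw [Matrix.mul_assoc, Matrix.mul_assoc, trace_mul_comm]
    simp only [Matrix.mul_assoc]
  ext Y
  constructor
  · rintro ⟨hY, h⟩
    refine ⟨hY, ?_, fun X hX => adj X Y ▸ h _ ⟨X, hX, rfl⟩⟩
    simp [IsSymm, hY.eq, Matrix.mul_assoc]
  · rintro ⟨hY, -, h⟩
    refine ⟨hY, ?_⟩
    rintro _ ⟨X, hX, rfl⟩
    exact adj X Y ▸ h X hX

/-- `(SDDⁿ₊(U))* = {Y ∈ Sⁿ : U Y Uᵀ ∈ (SDDᵗ₊)*} = {Y ∈ Sⁿ : U Y Uᵀ ∈ (SDDᵗ)* + Nᵗ}`. -/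
theorem dual_SDDplusU {t n : ℕ} (U : Matrix (Fin t) (Fin n) ℝ)
    (hU : ∀ i j, 0 ≤ U i j) (hrow : ∀ i, ∑ j, U i j = 1) :
    dualCone (SDDplusU U) =
      {Y | Y.IsSymm ∧ U * Y * Uᵀ ∈ dualCone (SDDplus t)} ∧
    dualCone (SDDplusU U) =
      {Y | Y.IsSymm ∧ U * Y * Uᵀ ∈ dualCone (SDD t) + NonnegMat t} := by
  rw [← dualCone_SDDplus]
  exact ⟨dualCone_SDDplusU U, dualCone_SDDplusU U⟩

end
end

section
/- Let G be a graph on vertices {1,…,t} with edge set E. Then SDD^G_+ = Σ_{{i,j}∈E} ι_{ij}(S²₊ ∩ N²); that is, a matrix lies in SDD^G ∩ N^t if and only if it is a sum over edges {i,j} ∈ E of embeddings of 2×2 positive semidefinite entrywise nonnegative matrices. -/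
open Matrix Set

noncomputable section

open scoped Classical in
/-- `SDD^G = Σ_{{i,j}∈E} ι_{ij}(S²₊)` (equal to `{0}` if `E = ∅`). -/
def SDDG {t : ℕ} (G : SimpleGraph (Fin t)) : Set (Matrix (Fin t) (Fin t) ℝ) :=
  {X | ∃ S : Fin t → Fin t → Matrix (Fin 2) (Fin 2) ℝ,
    (∀ i j : Fin t, (S i j).PosSemidef) ∧
    X = ∑ i : Fin t, ∑ j : Fin t, if i < j ∧ G.Adj i j then iota i j (S i j) else 0}

/-- `SDD^G₊ = SDD^G ∩ Nᵗ`. -/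
def SDDGplus {t : ℕ} (G : SimpleGraph (Fin t)) : Set (Matrix (Fin t) (Fin t) ℝ) :=
  SDDG G ∩ NonnegMat t

/-- `SDD^G₊(U) = Uᵀ (SDD^G₊) U`. -/
def SDDGplusU {t n : ℕ} (G : SimpleGraph (Fin t)) (U : Matrix (Fin t) (Fin n) ℝ) :
    Set (Matrix (Fin n) (Fin n) ℝ) :=
  {X | ∃ Y ∈ SDDGplus G, X = Uᵀ * Y * U}

/-- `seg(G,U) = ∪_{{i,j}∈E} [uᵢ, uⱼ]`. -/
def seg {t n : ℕ} (G : SimpleGraph (Fin t)) (U : Matrix (Fin t) (Fin n) ℝ) :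
    Set (Fin n → ℝ) :=
  {v | ∃ i j : Fin t, G.Adj i j ∧ v ∈ segment ℝ (U i) (U j)}

lemma iota_apply_of_lt {n : ℕ} {i j p q : Fin n} (hij : i < j) (hpq : p < q)
    (S : Matrix (Fin 2) (Fin 2) ℝ) :
    iota i j S p q = if p = i ∧ q = j then S 0 1 else 0 := by
  have h₁ : ¬(p = i ∧ q = i) := by rintro ⟨rfl, rfl⟩; exact lt_irrefl _ hpq
  have h₂ : ¬(p = j ∧ q = i) := by rintro ⟨rfl, rfl⟩; exact lt_asymm hij hpq
  have h₃ : ¬(p = j ∧ q = j) := by rintro ⟨rfl, rfl⟩; exact lt_irrefl _ hpq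
  simp [iota, h₁, h₂, h₃]

lemma iota_nonneg {n : ℕ} (i j : Fin n) {S : Matrix (Fin 2) (Fin 2) ℝ}
    (hS : ∀ a b, 0 ≤ S a b) (p q : Fin n) : 0 ≤ iota i j S p q := by
  have h (P : Prop) [Decidable P] (a b : Fin 2) : 0 ≤ if P then S a b else 0 := by
    split_ifs
    exacts [hS a b, le_rfl]
  exact add_nonneg (add_nonneg (add_nonneg (h _ _ _) (h _ _ _)) (h _ _ _)) (h _ _ _)

lemma iota_isSymm {n : ℕ} (i j : Fin n) {S : Matrix (Fin 2) (Fin 2) ℝ} (hS : S.IsSymm) :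
    (iota i j S).IsSymm := by
  ext p q
  simp only [iota, transpose_apply, of_apply, hS.apply 0 1, and_comm (a := q = _)]
  ring

open scoped Classical in
/-- Above the diagonal, the summands of an edge decomposition do not overlap. -/
lemma sum_iota_apply_of_lt {t : ℕ} (G : SimpleGraph (Fin t))
    (S : Fin t → Fin t → Matrix (Fin 2) (Fin 2) ℝ) {p q : Fin t} (hpq : p < q)
    (hadj : G.Adj p q) :
    (∑ i : Fin t, ∑ j : Fin t, if i < j ∧ G.Adj i j then iota i j (S i j) else 0) p q =
      S p q 0 1 := by
  simp only [Matrix.sum_apply]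
  rw [Finset.sum_eq_single_of_mem p (Finset.mem_univ p),
    Finset.sum_eq_single_of_mem q (Finset.mem_univ q)]
  · simp [hpq, hadj, iota_apply_of_lt hpq hpq]
  · intro j _ hj
    split_ifs with h
    · simp [iota_apply_of_lt h.1 hpq, hj.symm]
    · rfl
  · intro i _ hi
    refine Finset.sum_eq_zero fun j _ => ?_
    split_ifs with h
    · simp [iota_apply_of_lt h.1 hpq, hi.symm]
    · rfl

lemma Matrix.PosSemidef.isSymm_of_real {n : Type*} {S : Matrix n n ℝ} (hS : S.PosSemidef) :
    S.IsSymm := by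
  simpa [IsHermitian, IsSymm, conjTranspose_eq_transpose_of_trivial] using hS.isHermitian

open scoped Classical in
/-- `SDD^G₊ = Σ_{{i,j}∈E} ι_{ij}(S²₊ ∩ N²)`. -/
theorem SDDGplus_decomp {t : ℕ} (G : SimpleGraph (Fin t)) :
    SDDGplus G =
      {X | ∃ S : Fin t → Fin t → Matrix (Fin 2) (Fin 2) ℝ,
        (∀ i j : Fin t, (S i j).PosSemidef ∧ ∀ a b, 0 ≤ S i j a b) ∧
        X = ∑ i : Fin t, ∑ j : Fin t, if i < j ∧ G.Adj i j then iota i j (S i j) else 0} := by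
  ext X
  constructor
  · rintro ⟨⟨S, hS, rfl⟩, -, hnonneg⟩
    refine ⟨fun i j => if i < j ∧ G.Adj i j then S i j else 0, fun i j => ?_, ?_⟩
    · dsimp only
      split_ifs with h
      · have h01 : 0 ≤ S i j 0 1 := by
          rw [← sum_iota_apply_of_lt G S h.1 h.2]
          exact hnonneg i j
        have h10 : 0 ≤ S i j 1 0 := by
          rwa [(hS i j).isSymm_of_real.apply 0 1]
        refine ⟨hS i j, fun a b => ?_⟩
        fin_cases a <;> fin_cases b
        exacts [(hS i j).diag_nonneg, h01, h10, (hS i j).diag_nonneg]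
      · exact ⟨PosSemidef.zero, fun _ _ => le_rfl⟩
    · refine Finset.sum_congr rfl fun i _ => Finset.sum_congr rfl fun j _ => ?_
      split_ifs with h
      · simp [h]
      · rfl
  · rintro ⟨S, hS, rfl⟩
    refine ⟨⟨S, fun i j => (hS i j).1, rfl⟩, ?_, fun p q => ?_⟩
    · simp only [IsSymm, transpose_sum]
      refine Finset.sum_congr rfl fun i _ => Finset.sum_congr rfl fun j _ => ?_
      split_ifs
      · exact iota_isSymm i j (hS i j).1.isSymm_of_real
      · exact transpose_zero
    · simp only [Matrix.sum_apply]
      refine Finset.sum_nonneg fun i _ => Finset.sum_nonneg fun j _ => ?_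
      split_ifs
      · exact iota_nonneg i j (hS i j).2 p q
      · exact le_rfl

end
end
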